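/- arXiv:1812.09762 — 10 statements merged into one kernel-verified Lean document; each statement's English description precedes it below -/
import Mathlib

section
/- Let p : ℕ → ℕ → ℕ be a sequence of sequences of natural numbers. Define T ⊆ List ℕ to consist of: every finite sequence all of whose entries equal 1; for each n, the sequence σ_n consisting of n+1 ones followed by a single 0; and, for each n and j, the sequence σ_n ++ [j] whenever p n j = 0 and p n i ≠ 0 for all i < j. Then T is a tree, and for every n, σ_n is a leaf of T if and only if p n j ≠ 0 for all j. -/
/-- A tree is a set of finite sequences of naturals closed under initial segments. -/
def IsTree (T : Set (List ℕ)) : Prop :=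
  ∀ σ ∈ T, ∀ τ : List ℕ, τ <+: σ → τ ∈ T

/-- A leaf of `T` is a sequence in `T` with no one-step extension in `T`. -/
def IsLeaf (T : Set (List ℕ)) (σ : List ℕ) : Prop :=
  σ ∈ T ∧ ∀ j : ℕ, σ ++ [j] ∉ T

theorem lpo_tree (p : ℕ → ℕ → ℕ) (T : Set (List ℕ))
    (hT : T = {σ : List ℕ | ∀ x ∈ σ, x = 1}
        ∪ {σ : List ℕ | ∃ n : ℕ, σ = List.replicate (n + 1) 1 ++ [0]}
        ∪ {σ : List ℕ | ∃ n j : ℕ, p n j = 0 ∧ (∀ i < j, p n i ≠ 0) ∧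
            σ = (List.replicate (n + 1) 1 ++ [0]) ++ [j]}) :
    IsTree T ∧
      ∀ n : ℕ, IsLeaf T (List.replicate (n + 1) 1 ++ [0]) ↔ ∀ j : ℕ, p n j ≠ 0 := by
  subst hT
  have h1 : ∀ (n : ℕ) (τ : List ℕ), τ <+: List.replicate (n+1) 1 → ∀ x ∈ τ, x = 1 := by
    intro n τ h x hx
    exact List.eq_of_mem_replicate (h.subset hx)
  have key : ∀ (n m : ℕ), List.replicate (n+1) 1 ++ [0] ≠ List.replicate m 1 := by
    intro n m h
    have h0 : (0:ℕ) ∈ List.replicate m 1 := by rw [← h]; simp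
    have := List.eq_of_mem_replicate h0
    omega
  refine ⟨?_, ?_⟩
  · rintro σ ((h | ⟨n, rfl⟩) | ⟨n, j, hj, hi, rfl⟩) τ hτ
    · exact Or.inl (Or.inl fun x hx => h x (hτ.subset hx))
    · rcases List.prefix_concat_iff.1 hτ with h | h
      · exact Or.inl (Or.inr ⟨n, h⟩)
      · exact Or.inl (Or.inl (h1 n τ h))
    · rcases List.prefix_concat_iff.1 hτ with h | h
      · exact Or.inr ⟨n, j, hj, hi, h⟩
      · rcases List.prefix_concat_iff.1 h with h | h
        · exact Or.inl (Or.inr ⟨n, h⟩)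
        · exact Or.inl (Or.inl (h1 n τ h))
  · intro n
    constructor
    · rintro ⟨-, h⟩ j hj
      have hex : ∃ j, p n j = 0 := ⟨j, hj⟩
      exact h (Nat.find hex) (Or.inr ⟨n, Nat.find hex, Nat.find_spec hex,
        fun i hi => Nat.find_min hex hi, rfl⟩)
    · intro h
      refine ⟨Or.inl (Or.inr ⟨n, rfl⟩), ?_⟩
      rintro j ((h' | ⟨m, hm⟩) | ⟨m, k, hk, -, hm⟩)
      · have := h' 0 (by simp)
        omega
      · exact key n (m+1) (List.append_inj' hm rfl).1
      · obtain ⟨ha, -⟩ := List.append_inj' hm rfl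
        have hl := congrArg List.length ha
        simp at hl
        subst hl
        exact h k hk
end

section
/- Let T ⊆ List ℕ be a tree and T* = T⁺ ∪ { σ ++ [0] | σ ∈ T⁺ } where T⁺ = { σ.map (· + 1) | σ ∈ T }. Then: (i) a function p : ℕ → ℕ is an infinite path of T if and only if the function n ↦ p n + 1 is an infinite path of T*; and (ii) every infinite path q of T* satisfies q n ≥ 1 for all n, and n ↦ q n - 1 is an infinite path of T. Consequently p ↦ (n ↦ p n + 1) is a bijection from the set of infinite paths of T onto the set of infinite paths of T*. -/
/-- An infinite path of `T`: every finite initial segment belongs to `T`. -/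
def IsPath (T : Set (List ℕ)) (p : ℕ → ℕ) : Prop :=
  ∀ n : ℕ, (List.ofFn fun i : Fin n => p i) ∈ T

theorem star_paths (T Tp Ts : Set (List ℕ)) (hT : IsTree T)
    (hTp : Tp = (List.map (· + 1)) '' T)
    (hTs : Ts = Tp ∪ {l : List ℕ | ∃ σ ∈ Tp, l = σ ++ [0]}) :
    (∀ p : ℕ → ℕ, IsPath T p ↔ IsPath Ts (fun n => p n + 1)) ∧
    (∀ q : ℕ → ℕ, IsPath Ts q → (∀ n : ℕ, 1 ≤ q n) ∧ IsPath T (fun n => q n - 1)) ∧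
    Set.BijOn (fun p : ℕ → ℕ => fun n => p n + 1)
      {p : ℕ → ℕ | IsPath T p} {q : ℕ → ℕ | IsPath Ts q} := by
  subst hTp hTs
  have hmem : ∀ (p : ℕ → ℕ), IsPath T p →
      IsPath (List.map (· + 1) '' T ∪ {l : List ℕ | ∃ σ ∈ List.map (· + 1) '' T, l = σ ++ [0]})
        (fun n => p n + 1) := by
    intro p hp n
    refine Or.inl ⟨_, hp n, ?_⟩
    rw [List.map_ofFn]
    rfl
  have hback : ∀ q : ℕ → ℕ,
      IsPath (List.map (· + 1) '' T ∪ {l : List ℕ | ∃ σ ∈ List.map (· + 1) '' T, l = σ ++ [0]}) q →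
      (∀ n : ℕ, 1 ≤ q n) ∧ IsPath T (fun n => q n - 1) := by
    intro q hq
    have hpos : ∀ n, 1 ≤ q n := by
      intro n
      have hn : (List.ofFn fun i : Fin (n + 2) => q i)[n]? = some (q n) := by
        rw [List.getElem?_eq_getElem (by simp), List.getElem_ofFn]
      rcases hq (n + 2) with ⟨σ, -, h⟩ | ⟨_, ⟨σ, -, rfl⟩, h⟩
      · rw [← h, List.getElem?_map, Option.map_eq_some_iff] at hn
        obtain ⟨a, -, ha⟩ := hn
        omega
      · have hl := congrArg List.length h
        simp at hl
        rw [h, List.getElem?_append_left (by simp; omega), List.getElem?_map,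
          Option.map_eq_some_iff] at hn
        obtain ⟨a, -, ha⟩ := hn
        omega
    refine ⟨hpos, fun n => ?_⟩
    rcases hq n with ⟨σ, hσ, h⟩ | ⟨σ, -, h⟩
    · have h2 := congrArg (List.map (fun x => x - 1)) h
      rw [List.map_ofFn, List.map_map] at h2
      have h3 : ((fun x => x - 1) ∘ (fun x => x + 1) : ℕ → ℕ) = id := by
        funext x; simp
      rw [h3, List.map_id] at h2
      have h4 : (List.ofFn fun i : Fin n => q i - 1) = σ := h2.symm
      rw [h4]
      exact hσ
    · exfalso
      have h0 : 0 ∈ List.ofFn (fun i : Fin n => q i) := by rw [h]; simp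
      rw [List.mem_ofFn] at h0
      obtain ⟨i, hi⟩ := h0
      have := hpos i
      omega
  refine ⟨fun p => ⟨hmem p, fun h => ?_⟩, hback, fun p hp => hmem p hp, ?_, ?_⟩
  · simpa using (hback _ h).2
  · intro p _ p' _ h
    funext n
    have := congrFun h n
    simpa using this
  · intro q hq
    refine ⟨fun n => q n - 1, (hback q hq).2, ?_⟩
    funext n
    have := (hback q hq).1 n
    simp only
    omega
end

section
/- Let T ⊆ List ℕ be a tree and T* = T⁺ ∪ { σ ++ [0] | σ ∈ T⁺ } where T⁺ = { σ.map (· + 1) | σ ∈ T }. Then T has at most one infinite path if and only if T* has at most one infinite path. -/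
theorem path_star_aux (T : Set (List ℕ)) (hT : IsTree T) (p : ℕ → ℕ)
    (hp : IsPath ((List.map (· + 1)) '' T ∪
      {l : List ℕ | ∃ σ ∈ (List.map (· + 1)) '' T, l = σ ++ [0]}) p) :
    IsPath T (fun n => p n - 1) ∧ ∀ n, p n = (p n - 1) + 1 := by
  have key : ∀ n : ℕ, ∃ σ ∈ T, σ.map (· + 1) = List.ofFn fun i : Fin n => p i := by
    intro n
    have e : (List.ofFn fun i : Fin (n + 1) => p i)
        = (List.ofFn fun i : Fin n => p i) ++ [p n] := by
      rw [List.ofFn_succ_last]; simp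
    rcases hp (n + 1) with ⟨σ, hσ, h⟩ | ⟨_, ⟨σ, hσ, rfl⟩, h⟩
    · refine ⟨σ.dropLast, hT σ hσ _ (List.dropLast_prefix σ), ?_⟩
      rw [List.map_dropLast, h, e, List.dropLast_concat]
    · refine ⟨σ, hσ, ?_⟩
      rw [e] at h
      exact (List.append_inj_left' h rfl).symm
  refine ⟨fun n => ?_, fun n => ?_⟩
  · obtain ⟨σ, hσ, h⟩ := key n
    have h2 := congrArg (List.map (fun x => x - 1)) h
    rw [List.map_map, List.map_ofFn] at h2
    have h3 : ((fun x : ℕ => x - 1) ∘ fun x => x + 1) = id := by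
      funext x; simp
    rw [h3, List.map_id] at h2
    rw [h2] at hσ
    exact hσ
  · obtain ⟨σ, hσ, h⟩ := key (n + 1)
    have hm : p n ∈ List.ofFn fun i : Fin (n + 1) => p i :=
      (List.mem_ofFn' _ _).2 ⟨Fin.last n, rfl⟩
    rw [← h, List.mem_map] at hm
    obtain ⟨a, _, ha⟩ := hm
    omega

theorem star_at_most_one_path (T Tp Ts : Set (List ℕ)) (hT : IsTree T)
    (hTp : Tp = (List.map (· + 1)) '' T)
    (hTs : Ts = Tp ∪ {l : List ℕ | ∃ σ ∈ Tp, l = σ ++ [0]}) :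
    (∀ p q : ℕ → ℕ, IsPath T p → IsPath T q → p = q) ↔
      (∀ p q : ℕ → ℕ, IsPath Ts p → IsPath Ts q → p = q) := by
  subst hTp
  subst hTs
  constructor
  · intro H p q hp hq
    obtain ⟨hp1, hp2⟩ := path_star_aux T hT p hp
    obtain ⟨hq1, hq2⟩ := path_star_aux T hT q hq
    have h := H _ _ hp1 hq1
    funext n
    have := congrFun h n
    rw [hp2 n, hq2 n]
    exact congrArg (· + 1) this
  · intro H p q hp hq
    have h := H (fun n => p n + 1) (fun n => q n + 1)
      (fun n => Or.inl ⟨_, hp n, by rw [List.map_ofFn]; rfl⟩)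
      (fun n => Or.inl ⟨_, hq n, by rw [List.map_ofFn]; rfl⟩)
    funext n
    have := congrFun h n
    exact Nat.succ.inj this
end

section
/- Let T ⊆ List ℕ be a tree and T* = T⁺ ∪ { σ ++ [0] | σ ∈ T⁺ } where T⁺ = { σ.map (· + 1) | σ ∈ T }. Then a set S ⊆ List ℕ is a perfect subtree of T if and only if S⁺ = { σ + 1 | σ ∈ S } is a perfect subtree of T*. -/
/-- Two sequences are incompatible if neither is a prefix of the other. -/
def Incomp (σ τ : List ℕ) : Prop :=
  ¬ σ <+: τ ∧ ¬ τ <+: σ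

/-- `S` is a perfect subtree of `T`: a subtree each of whose elements has
two incompatible extensions in `S`. -/
def IsPerfectSubtree (T S : Set (List ℕ)) : Prop :=
  IsTree S ∧ S ⊆ T ∧
    ∀ σ ∈ S, ∃ τ₁ ∈ S, ∃ τ₂ ∈ S, σ <+: τ₁ ∧ σ <+: τ₂ ∧ Incomp τ₁ τ₂

theorem star_map_inj : Function.Injective (List.map (· + 1 : ℕ → ℕ)) :=
  List.map_injective_iff.mpr (add_left_injective 1)

theorem star_map_prefix (a b : List ℕ) :
    a.map (· + 1) <+: b.map (· + 1) ↔ a <+: b := by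
  constructor
  · intro h
    have h2 := h.map (· - 1)
    simpa [List.map_map, Function.comp_def] using h2
  · intro h
    exact h.map _

theorem star_prefix_map {a b : List ℕ} (h : a <+: b.map (· + 1)) :
    ∃ c, c <+: b ∧ c.map (· + 1) = a := by
  refine ⟨b.take a.length, List.take_prefix _ _, ?_⟩
  rw [List.map_take]
  exact (List.prefix_iff_eq_take.mp h).symm

theorem star_perfect_subtrees (T Tp Ts : Set (List ℕ)) (hT : IsTree T)
    (hTp : Tp = (List.map (· + 1)) '' T)
    (hTs : Ts = Tp ∪ {l : List ℕ | ∃ σ ∈ Tp, l = σ ++ [0]}) :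
    ∀ S : Set (List ℕ),
      IsPerfectSubtree T S ↔ IsPerfectSubtree Ts ((List.map (· + 1)) '' S) := by
  intro S
  subst hTp hTs
  constructor
  · rintro ⟨h1, h2, h3⟩
    refine ⟨?_, ?_, ?_⟩
    · rintro _ ⟨σ, hσ, rfl⟩ τ hτ
      obtain ⟨c, hc, rfl⟩ := star_prefix_map hτ
      exact ⟨c, h1 σ hσ c hc, rfl⟩
    · rintro _ ⟨σ, hσ, rfl⟩
      exact Or.inl ⟨σ, h2 hσ, rfl⟩
    · rintro _ ⟨σ, hσ, rfl⟩
      obtain ⟨a, ha, b, hb, hsa, hsb, hi, hj⟩ := h3 σ hσ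
      exact ⟨_, ⟨a, ha, rfl⟩, _, ⟨b, hb, rfl⟩, hsa.map _, hsb.map _,
        fun h => hi ((star_map_prefix _ _).mp h), fun h => hj ((star_map_prefix _ _).mp h)⟩
  · rintro ⟨h1, h2, h3⟩
    refine ⟨?_, ?_, ?_⟩
    · intro σ hσ τ hτ
      obtain ⟨c, hc, he⟩ := h1 _ ⟨σ, hσ, rfl⟩ _ (hτ.map _)
      exact star_map_inj he ▸ hc
    · intro σ hσ
      rcases h2 ⟨σ, hσ, rfl⟩ with ⟨c, hc, he⟩ | ⟨c, _, he⟩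
      · exact star_map_inj he ▸ hc
      · exfalso
        have h0 : (0 : ℕ) ∈ List.map (· + 1) σ := by rw [he]; simp
        simp at h0
    · intro σ hσ
      obtain ⟨_, ⟨a, ha, rfl⟩, _, ⟨b, hb, rfl⟩, hsa, hsb, hi, hj⟩ := h3 _ ⟨σ, hσ, rfl⟩
      exact ⟨a, ha, b, hb, (star_map_prefix _ _).mp hsa, (star_map_prefix _ _).mp hsb,
        fun h => hi (h.map _), fun h => hj (h.map _)⟩
end

section
/- Let T ⊆ List ℕ be a tree and T* = T⁺ ∪ { σ ++ [0] | σ ∈ T⁺ } where T⁺ = { σ.map (· + 1) | σ ∈ T }. Then every perfect subtree of T* is of the form S⁺ = { σ + 1 | σ ∈ S } for some perfect subtree S of T; in particular, no element of a perfect subtree of T* has an entry equal to 0. -/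
theorem star_perfect_subtrees_form (T Tp Ts : Set (List ℕ)) (hT : IsTree T)
    (hTp : Tp = (List.map (· + 1)) '' T)
    (hTs : Ts = Tp ∪ {l : List ℕ | ∃ σ ∈ Tp, l = σ ++ [0]}) :
    ∀ P : Set (List ℕ), IsPerfectSubtree Ts P →
      (∃ S : Set (List ℕ), IsPerfectSubtree T S ∧ P = (List.map (· + 1)) '' S) ∧
        ∀ σ ∈ P, (0 : ℕ) ∉ σ := by
  intro P ⟨hPt, hPs, hPp⟩
  have inv : ∀ l : List ℕ, (l.map (· + 1)).map (· - 1) = l := by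
    intro l
    simp [List.map_map, Function.comp_def]
  have pre : ∀ a b : List ℕ, a.map (· + 1) <+: b.map (· + 1) ↔ a <+: b := by
    intro a b
    constructor
    · intro h
      have h2 := h.map (· - 1)
      rwa [inv, inv] at h2
    · intro h
      exact h.map _
  have nz : ∀ σ ∈ Tp, (0 : ℕ) ∉ σ := by
    subst hTp
    rintro _ ⟨σ, _, rfl⟩
    simp
  have ext : ∀ σ ∈ Tp, ∀ τ ∈ Ts, σ ++ [0] <+: τ → τ = σ ++ [0] := by
    intro σ hσ τ hτ hp
    have h0 : (0 : ℕ) ∈ τ := hp.subset (by simp)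
    rw [hTs] at hτ
    rcases hτ with hτ | ⟨ρ, hρ, rfl⟩
    · exact absurd h0 (nz τ hτ)
    · rcases List.prefix_concat_iff.1 hp with h | h
      · exact h.symm
      · exact absurd (h.subset (by simp)) (nz ρ hρ)
  have key : P ⊆ Tp := by
    intro l hl
    have h1 := hPs hl
    rw [hTs] at h1
    rcases h1 with h1 | ⟨σ, hσ, rfl⟩
    · exact h1
    · obtain ⟨a, ha, b, hb, h1, h2, h3⟩ := hPp _ hl
      have e1 := ext σ hσ a (hPs ha) h1
      have e2 := ext σ hσ b (hPs hb) h2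
      subst e1
      subst e2
      exact absurd (List.prefix_refl _) h3.1
  have key2 : ∀ l ∈ P, ∃ σ ∈ T, σ.map (· + 1) = l := by
    intro l hl
    have := key hl
    rwa [hTp] at this
  refine ⟨⟨{σ | σ.map (· + 1) ∈ P}, ⟨?_, ?_, ?_⟩, ?_⟩, fun σ h => nz σ (key h)⟩
  · intro σ hσ τ h
    exact hPt _ hσ _ (h.map _)
  · intro σ hσ
    obtain ⟨ρ, hρ, e⟩ := key2 _ hσ
    have := congrArg (List.map (· - 1)) e
    rw [inv, inv] at this
    exact this ▸ hρ
  · intro σ hσ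
    obtain ⟨a, ha, b, hb, h1, h2, h3⟩ := hPp _ hσ
    obtain ⟨a, _, rfl⟩ := key2 _ ha
    obtain ⟨b, _, rfl⟩ := key2 _ hb
    refine ⟨a, ha, b, hb, (pre _ _).1 h1, (pre _ _).1 h2, ?_, ?_⟩
    · exact fun h => h3.1 ((pre _ _).2 h)
    · exact fun h => h3.2 ((pre _ _).2 h)
  · apply Set.Subset.antisymm
    · intro l hl
      obtain ⟨σ, _, rfl⟩ := key2 _ hl
      exact ⟨σ, hl, rfl⟩
    · rintro _ ⟨σ, hσ, rfl⟩
      exact hσ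
end

section
/- Let T ⊆ List ℕ be a tree and T* = T⁺ ∪ { σ ++ [0] | σ ∈ T⁺ } where T⁺ = { σ.map (· + 1) | σ ∈ T }. Then a set K ⊆ List ℕ is the perfect kernel of T (the union of all perfect subtrees of T) if and only if K⁺ = { σ + 1 | σ ∈ K } is the perfect kernel of T*. -/
/-- The perfect kernel of `T`: the union of all perfect subtrees of `T`. -/
def PerfectKernel (T : Set (List ℕ)) : Set (List ℕ) :=
  {σ : List ℕ | ∃ S : Set (List ℕ), IsPerfectSubtree T S ∧ σ ∈ S}

theorem succ_map_inj : Function.Injective (List.map (fun x : ℕ => x + 1)) :=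
  List.map_injective_iff.mpr (fun a b h => by simpa using h)

theorem succ_map_prefix (σ τ : List ℕ) :
    List.map (fun x : ℕ => x + 1) σ <+: List.map (fun x : ℕ => x + 1) τ ↔ σ <+: τ := by
  constructor
  · intro h
    obtain ⟨l, hl, he⟩ := List.prefix_map_iff.mp h
    rw [succ_map_inj he]; exact hl
  · intro h
    exact h.map _

theorem kernel_eq (T Tp Ts : Set (List ℕ))
    (hTp : Tp = (List.map (· + 1)) '' T)
    (hTs : Ts = Tp ∪ {l : List ℕ | ∃ σ ∈ Tp, l = σ ++ [0]}) :
    (List.map (· + 1)) '' PerfectKernel T = PerfectKernel Ts := by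
  have hz : ∀ σ ∈ Tp, 0 ∉ σ := by
    rw [hTp]
    rintro _ ⟨σ, _, rfl⟩
    simp
  ext σ
  constructor
  · rintro ⟨σ, ⟨S, ⟨hS, hST, hp⟩, hσ⟩, rfl⟩
    refine ⟨List.map (· + 1) '' S, ⟨?_, ?_, ?_⟩, ⟨σ, hσ, rfl⟩⟩
    · rintro _ ⟨a, ha, rfl⟩ τ hτ
      obtain ⟨l, hl, rfl⟩ := List.prefix_map_iff.mp hτ
      exact ⟨l, hS a ha l hl, rfl⟩
    · rw [hTs, hTp]
      exact (Set.image_mono hST).trans Set.subset_union_left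
    · rintro _ ⟨a, ha, rfl⟩
      obtain ⟨t, ht, u, hu, h1, h2, h3, h4⟩ := hp a ha
      exact ⟨_, ⟨t, ht, rfl⟩, _, ⟨u, hu, rfl⟩, (succ_map_prefix _ _).2 h1,
        (succ_map_prefix _ _).2 h2, fun h => h3 ((succ_map_prefix _ _).1 h),
        fun h => h4 ((succ_map_prefix _ _).1 h)⟩
  · rintro ⟨S, ⟨hS, hST, hp⟩, hσ⟩
    have hend : ∀ ρ τ, τ ∈ S → ρ ++ [0] <+: τ → τ = ρ ++ [0] := by
      intro ρ τ hτ h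
      have h1 := hST hτ
      rw [hTs] at h1
      rcases h1 with h1 | ⟨r, hr, rfl⟩
      · exact absurd (h.subset (by simp)) (hz _ h1)
      · rcases List.prefix_concat_iff.mp h with h | h
        · exact h.symm
        · exact absurd (h.subset (by simp)) (hz _ hr)
    have hsub : ∀ σ ∈ S, ∃ a ∈ T, List.map (· + 1) a = σ := by
      intro σ hσ
      have h1 := hST hσ
      rw [hTs] at h1
      rcases h1 with h1 | ⟨r, hr, rfl⟩
      · rw [hTp] at h1; exact h1
      · obtain ⟨t, ht, u, hu, h1, h2, h3, h4⟩ := hp _ hσ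
        rw [hend r t ht h1, hend r u hu h2] at h3
        exact absurd (List.prefix_refl _) h3
    obtain ⟨a, ha, rfl⟩ := hsub σ hσ
    refine ⟨a, ⟨List.map (· + 1) ⁻¹' S, ⟨?_, ?_, ?_⟩, hσ⟩, rfl⟩
    · intro b hb τ hτ
      exact hS _ hb _ ((succ_map_prefix _ _).2 hτ)
    · intro b hb
      obtain ⟨c, hc, he⟩ := hsub _ hb
      rw [← succ_map_inj he]; exact hc
    · intro b hb
      obtain ⟨t, ht, u, hu, h1, h2, h3, h4⟩ := hp _ hb
      obtain ⟨t, _, rfl⟩ := hsub t ht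
      obtain ⟨u, _, rfl⟩ := hsub u hu
      exact ⟨t, ht, u, hu, (succ_map_prefix _ _).1 h1, (succ_map_prefix _ _).1 h2,
        fun h => h3 ((succ_map_prefix _ _).2 h), fun h => h4 ((succ_map_prefix _ _).2 h)⟩

theorem star_perfect_kernel (T Tp Ts : Set (List ℕ)) (hT : IsTree T)
    (hTp : Tp = (List.map (· + 1)) '' T)
    (hTs : Ts = Tp ∪ {l : List ℕ | ∃ σ ∈ Tp, l = σ ++ [0]}) :
    ∀ K : Set (List ℕ),
      K = PerfectKernel T ↔ (List.map (· + 1)) '' K = PerfectKernel Ts := by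
  intro K
  rw [← kernel_eq T Tp Ts hTp hTs]
  exact succ_map_inj.image_injective.eq_iff.symm
end

section
/- Let T ⊆ List ℕ be a tree and σ ∈ T. Then σ belongs to some perfect subtree of T if and only if there exists a function f : List Bool → List ℕ such that: f [] = σ; f s ∈ T for every s; whenever s is a prefix of t, f s is a prefix of f t; and for every s, the sequences f (s ++ [false]) and f (s ++ [true]) are incompatible extensions of f s (each properly extends f s and neither is a prefix of the other). -/
theorem mem_perfect_subtree_iff (T : Set (List ℕ)) (hT : IsTree T)
    (σ : List ℕ) (hσ : σ ∈ T) :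
    (∃ S : Set (List ℕ), IsPerfectSubtree T S ∧ σ ∈ S) ↔
      ∃ f : List Bool → List ℕ,
        f [] = σ ∧
        (∀ s : List Bool, f s ∈ T) ∧
        (∀ s t : List Bool, s <+: t → f s <+: f t) ∧
        (∀ s : List Bool,
          f s <+: f (s ++ [false]) ∧ f (s ++ [false]) ≠ f s ∧
          f s <+: f (s ++ [true]) ∧ f (s ++ [true]) ≠ f s ∧
          Incomp (f (s ++ [false])) (f (s ++ [true]))) := by
  constructor
  · rintro ⟨S, ⟨hS, hST, hp⟩, hs⟩
    have h : ∀ τ : S, ∃ p : Bool → S, τ.1 <+: (p false).1 ∧ τ.1 <+: (p true).1 ∧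
        Incomp (p false).1 (p true).1 := by
      rintro ⟨τ, hτ⟩
      obtain ⟨a, ha, b, hb, h1, h2, h3⟩ := hp τ hτ
      exact ⟨fun c => if c then ⟨b, hb⟩ else ⟨a, ha⟩, by simpa using ⟨h1, h2, h3⟩⟩
    choose p h0 h1 hi using h
    have hpb : ∀ (b : Bool) (τ : S), τ.1 <+: (p τ b).1 := by
      intro b τ
      cases b
      · exact h0 τ
      · exact h1 τ
    have hmono : ∀ (r : List Bool) (τ : S), τ.1 <+: (r.foldl p τ).1 := by
      intro r
      induction r with
      | nil => intro τ; exact List.prefix_refl _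
      | cons b r ih => intro τ; exact (hpb b τ).trans (ih _)
    refine ⟨fun s => (s.foldl p ⟨σ, hs⟩).1, rfl, fun s => hST (Subtype.property _), ?_, ?_⟩
    · rintro s _ ⟨r, rfl⟩
      simp only [List.foldl_append]
      exact hmono r _
    · intro s
      simp only [List.foldl_append, List.foldl_cons, List.foldl_nil]
      generalize s.foldl p ⟨σ, hs⟩ = τ
      refine ⟨h0 τ, fun e => (hi τ).1 ?_, h1 τ, fun e => (hi τ).2 ?_, hi τ⟩
      · rw [e]; exact h1 τ
      · rw [e]; exact h0 τ
  · rintro ⟨f, hf, hfT, hm, hb⟩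
    refine ⟨{τ | ∃ s, τ <+: f s}, ⟨?_, ?_, ?_⟩, ⟨[], by rw [hf]⟩⟩
    · rintro τ ⟨s, h⟩ ρ hρ
      exact ⟨s, hρ.trans h⟩
    · rintro τ ⟨s, h⟩
      exact hT _ (hfT s) _ h
    · rintro τ ⟨s, h⟩
      obtain ⟨h1, -, h2, -, h3⟩ := hb s
      exact ⟨_, ⟨_, List.prefix_refl _⟩, _, ⟨_, List.prefix_refl _⟩, h.trans h1, h.trans h2, h3⟩
end

section
/- Let ⟨T_i⟩_{i ∈ ℕ} be a sequence of trees in List ℕ. For σ, τ : List ℕ of equal length n, let σ * τ denote the interleaving ⟨σ 0, τ 0, σ 1, τ 1, …, σ (n-1), τ (n-1)⟩. Define T ⊆ List ℕ to consist of: the empty sequence; the sequence [i] for each i ∈ ℕ; and, for each i, each σ ∈ T_i, and each τ ∈ {0,1}^{σ.length}, both the sequence [i] ++ (σ * τ) and the sequence obtained from [i] ++ (σ * τ) by deleting its last entry. Then T is a tree, and for every i, the sequence [i] belongs to the perfect kernel of T (equivalently, [i] belongs to some perfect subtree of T) if and only if T_i has an infinite path. -/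
/-- Interleaving of two lists of the same length:
`interleave [a₀,…,aₙ] [b₀,…,bₙ] = [a₀,b₀,…,aₙ,bₙ]`. -/
def interleave : List ℕ → List ℕ → List ℕ
  | [], _ => []
  | _ :: _, [] => []
  | a :: as, b :: bs => a :: b :: interleave as bs

def evL : List ℕ → List ℕ
  | [] => []
  | [a] => [a]
  | a :: _ :: l => a :: evL l

def odL : List ℕ → List ℕ
  | [] => []
  | [_] => []
  | _ :: b :: l => b :: odL l

def PreL : (ℕ → ℕ) → List ℕ → Prop
  | _, [] => True
  | p, [a] => a = p 0
  | p, a :: b :: l => a = p 0 ∧ b ≤ 1 ∧ PreL (fun n => p (n + 1)) l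

theorem ev_prefix : ∀ l u : List ℕ, evL l <+: evL (l ++ u)
  | [], u => by simp [evL]
  | [a], [] => by simp
  | [a], b :: u => by simp [evL]
  | a :: b :: l, u => by
    have := ev_prefix l u
    simpa [evL, List.cons_prefix_cons] using this

theorem od_prefix : ∀ l u : List ℕ, odL l <+: odL (l ++ u)
  | [], u => by simp [odL]
  | [a], u => by simp [odL]
  | a :: b :: l, u => by
    have := od_prefix l u
    simpa [odL, List.cons_prefix_cons] using this

theorem ev_inter : ∀ σ τ : List ℕ, τ.length = σ.length → evL (interleave σ τ) = σ
  | [], _, _ => by simp [interleave, evL]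
  | a :: s, [], h => by simp at h
  | a :: s, b :: t, h => by
    have := ev_inter s t (by simpa using h)
    simp [interleave, evL, this]

theorem od_inter : ∀ σ τ : List ℕ, τ.length = σ.length → odL (interleave σ τ) = τ
  | [], t, h => by
    have : t = [] := by simpa using h
    simp [interleave, odL, this]
  | a :: s, [], h => by simp at h
  | a :: s, b :: t, h => by
    have := od_inter s t (by simpa using h)
    simp [interleave, odL, this]

theorem ev_inter_drop : ∀ σ τ : List ℕ, τ.length = σ.length →
    evL (interleave σ τ).dropLast = σ
  | [], _, _ => by simp [interleave, evL]
  | a :: s, [], h => by simp at h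
  | [a], b :: t, h => by simp [interleave, evL]
  | a :: a' :: s, [b], h => by simp at h
  | a :: a' :: s, b :: b' :: t, h => by
    have := ev_inter_drop (a' :: s) (b' :: t) (by simpa using h)
    simp only [interleave, List.dropLast_cons_cons, evL] at this ⊢
    rw [this]

theorem exists_inter : ∀ l : List ℕ, (∀ x ∈ odL l, x ≤ 1) →
    ∃ τ : List ℕ, τ.length = (evL l).length ∧ (∀ x ∈ τ, x ≤ 1) ∧
      (l = interleave (evL l) τ ∨ (interleave (evL l) τ ≠ [] ∧
        l = (interleave (evL l) τ).dropLast))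
  | [], _ => ⟨[], by simp [evL, interleave]⟩
  | [a], _ => ⟨[0], by simp [evL, interleave]⟩
  | a :: b :: l, h => by
    obtain ⟨t, h1, h2, h3⟩ := exists_inter l (fun x hx => h x (by simp [odL, hx]))
    refine ⟨b :: t, by simp [evL, h1], ?_, ?_⟩
    · intro x hx
      rcases List.mem_cons.1 hx with rfl | hx
      · exact h _ (by simp [odL])
      · exact h2 x hx
    · rcases h3 with h3 | ⟨h3, h4⟩
      · left
        simp only [evL, interleave]
        rw [← h3]
      · right
        simp only [evL, interleave]
        refine ⟨by simp, ?_⟩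
        rw [List.dropLast_cons_cons, List.dropLast_cons_of_ne_nil h3, ← h4]

theorem pre_ev : ∀ (p : ℕ → ℕ) (l : List ℕ), PreL p l →
    evL l = List.ofFn (fun j : Fin (evL l).length => p j) ∧ ∀ x ∈ odL l, x ≤ 1
  | p, [], _ => by simp [evL, odL]
  | p, [a], h => by
    simp only [PreL] at h
    simp [evL, odL, h]
  | p, a :: b :: l, h => by
    obtain ⟨h1, h2, h3⟩ := h
    obtain ⟨h4, h5⟩ := pre_ev _ l h3
    constructor
    · simp only [evL, List.length_cons, List.ofFn_succ, Fin.val_zero, Fin.val_succ]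
      rw [← h4, h1]
    · intro x hx
      rcases List.mem_cons.1 hx with rfl | hx
      · exact h2
      · exact h5 x hx

theorem pre_app : ∀ (p : ℕ → ℕ) (l u : List ℕ), PreL p (l ++ u) → PreL p l
  | p, [], _, _ => by simp [PreL]
  | p, [a], [], h => by simpa using h
  | p, [a], b :: u, h => h.1
  | p, a :: b :: l, u, h => ⟨h.1, h.2.1, pre_app _ l u h.2.2⟩

theorem pre_branch : ∀ (p : ℕ → ℕ) (l : List ℕ), PreL p l →
    ∃ u : List ℕ, PreL p (l ++ u ++ [0]) ∧ PreL p (l ++ u ++ [1])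
  | p, [], _ => ⟨[p 0], by simp [PreL]⟩
  | p, [a], h => ⟨[], by simpa [PreL] using h⟩
  | p, a :: b :: l, h => by
    obtain ⟨u, h1, h2⟩ := pre_branch _ l h.2.2
    exact ⟨u, ⟨h.1, h.2.1, h1⟩, ⟨h.1, h.2.1, h2⟩⟩

theorem ev_ofFn : ∀ (n : ℕ) (q : ℕ → ℕ), evL (List.ofFn fun j : Fin (2 * n) => q j) =
    List.ofFn fun j : Fin n => q (2 * j)
  | 0, q => by simp [evL]
  | n + 1, q => by
    have := ev_ofFn n (fun k => q (k + 2))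
    have e : (List.ofFn fun j : Fin (2 * (n + 1)) => q j) =
      q 0 :: q 1 :: List.ofFn fun j : Fin (2 * n) => q (j + 2) := by
      change (List.ofFn fun j : Fin (2 * n + 1 + 1) => q j) = _
      simp [List.ofFn_succ]
    rw [e]
    simp only [evL, List.ofFn_succ, this]
    simp [mul_add]

theorem mem_char (Ti : ℕ → Set (List ℕ)) (T : Set (List ℕ))
    (hT : T = {([] : List ℕ)}
        ∪ {l : List ℕ | ∃ i : ℕ, l = [i]}
        ∪ {l : List ℕ | ∃ i : ℕ, ∃ σ τ : List ℕ, σ ∈ Ti i ∧ τ.length = σ.length ∧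
            (∀ x ∈ τ, x ≤ 1) ∧
            (l = i :: interleave σ τ ∨ l = (i :: interleave σ τ).dropLast)})
    (i : ℕ) (l : List ℕ) :
    i :: l ∈ T ↔ l = [] ∨ (evL l ∈ Ti i ∧ ∀ x ∈ odL l, x ≤ 1) := by
  subst hT
  constructor
  · rintro ((h | ⟨j, h⟩) | ⟨j, s, t, hs, ht, hb, h | h⟩)
    · simp at h
    · left; simp at h; exact h.2
    · right
      obtain ⟨rfl, rfl⟩ := List.cons.inj h
      rw [ev_inter _ _ ht, od_inter _ _ ht]
      exact ⟨hs, hb⟩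
    · by_cases hn : interleave s t = []
      · simp [hn] at h
      · rw [List.dropLast_cons_of_ne_nil hn] at h
        obtain ⟨rfl, rfl⟩ := List.cons.inj h
        right
        rw [ev_inter_drop _ _ ht]
        refine ⟨hs, fun x hx => hb x ?_⟩
        rw [← od_inter _ _ ht]
        have := od_prefix (interleave s t).dropLast [(interleave s t).getLast hn]
        rw [List.dropLast_append_getLast] at this
        exact this.subset hx
  · rintro (rfl | ⟨h1, h2⟩)
    · left; right; exact ⟨i, rfl⟩
    · right
      obtain ⟨t, h3, h4, h5⟩ := exists_inter l h2
      refine ⟨i, evL l, t, h1, h3, h4, ?_⟩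
      rcases h5 with h5 | ⟨h5, h6⟩
      · left; rw [← h5]
      · right; rw [List.dropLast_cons_of_ne_nil h5, ← h6]

theorem kernel_detects_paths (Ti : ℕ → Set (List ℕ)) (hTi : ∀ i : ℕ, IsTree (Ti i))
    (T : Set (List ℕ))
    (hT : T = {([] : List ℕ)}
        ∪ {l : List ℕ | ∃ i : ℕ, l = [i]}
        ∪ {l : List ℕ | ∃ i : ℕ, ∃ σ τ : List ℕ, σ ∈ Ti i ∧ τ.length = σ.length ∧
            (∀ x ∈ τ, x ≤ 1) ∧
            (l = i :: interleave σ τ ∨ l = (i :: interleave σ τ).dropLast)}) :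
    IsTree T ∧
      ∀ i : ℕ, (∃ S : Set (List ℕ), IsPerfectSubtree T S ∧ [i] ∈ S) ↔
        ∃ p : ℕ → ℕ, IsPath (Ti i) p := by
  have hc := mem_char Ti T hT
  have hnil : [] ∈ T := by rw [hT]; simp
  refine ⟨?_, fun i => ⟨?_, ?_⟩⟩
  · rintro s hs t ⟨u, rfl⟩
    cases t with
    | nil => exact hnil
    | cons i l =>
      rw [List.cons_append, hc] at hs
      rw [hc]
      rcases hs with hs | ⟨h1, h2⟩
      · left; exact (List.append_eq_nil_iff.1 hs).1
      · right
        exact ⟨hTi i _ h1 _ (ev_prefix l u), fun x hx => h2 x ((od_prefix l u).subset hx)⟩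
  · rintro ⟨S, ⟨hS, hST, hP⟩, hi⟩
    have step : ∀ l : List ℕ, i :: l ∈ S → ∃ a, i :: (l ++ [a]) ∈ S := by
      intro l hl
      obtain ⟨t1, h1, t2, h2, ⟨u, rfl⟩, h4, h5⟩ := hP _ hl
      cases u with
      | nil => exact absurd (by simpa using h4) h5.1
      | cons a u => exact ⟨a, hS _ h1 _ ⟨u, by simp⟩⟩
    choose! f hf using step
    let x : ℕ → List ℕ := fun n => Nat.rec [] (fun _ l => l ++ [f l]) n
    have hx : ∀ n, i :: x n ∈ S := by
      intro n
      induction n with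
      | zero => exact hi
      | succ n ih => exact hf _ ih
    have hxe : ∀ n, x n = List.ofFn fun j : Fin n => f (x j) := by
      intro n
      induction n with
      | zero => rfl
      | succ n ih =>
        rw [List.ofFn_succ_last]
        simp only [Fin.val_castSucc, Fin.val_last]
        rw [← ih]
    have key : ∀ n, (List.ofFn fun j : Fin (n + 1) => f (x (2 * j))) ∈ Ti i := by
      intro n
      have h := (hc _ _).1 (hST (hx (2 * (n + 1))))
      rw [hxe, ev_ofFn (n + 1) (fun k => f (x k))] at h
      rcases h with h | h
      · have := congrArg List.length h
        simp at this
      · exact h.1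
    refine ⟨fun k => f (x (2 * k)), fun n => hTi i _ (key n) _ ?_⟩
    rw [List.ofFn_succ_last]
    simp
  · rintro ⟨p, hp⟩
    refine ⟨{l | ∀ j t, l = j :: t → j = i ∧ PreL p t}, ⟨?_, ?_, ?_⟩, ?_⟩
    · rintro s hs t ⟨u, rfl⟩ j t' rfl
      obtain ⟨h1, h2⟩ := hs j (t' ++ u) rfl
      exact ⟨h1, pre_app _ _ _ h2⟩
    · intro l hl
      cases l with
      | nil => exact hnil
      | cons j t =>
        obtain ⟨rfl, h⟩ := hl _ _ rfl
        obtain ⟨h1, h2⟩ := pre_ev _ _ h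
        rw [hc]
        right
        refine ⟨?_, h2⟩
        rw [h1]
        exact hp _
    · have main : ∀ t, PreL p t → ∃ u, PreL p (t ++ u ++ [0]) ∧ PreL p (t ++ u ++ [1]) :=
        pre_branch p
      have inc : ∀ l : List ℕ, Incomp (l ++ [0]) (l ++ [1]) := by
        intro l
        simp [Incomp, List.prefix_append_right_inj]
      intro s hs
      have : ∃ t, PreL p t ∧ s <+: i :: t := by
        cases s with
        | nil => exact ⟨[], trivial, by simp⟩
        | cons j t =>
          obtain ⟨rfl, h⟩ := hs _ _ rfl
          exact ⟨t, h, List.prefix_rfl⟩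
      obtain ⟨t, ht, hst⟩ := this
      obtain ⟨u, h0, h1⟩ := main t ht
      refine ⟨i :: (t ++ u ++ [0]), ?_, i :: (t ++ u ++ [1]), ?_, ?_, ?_, ?_⟩
      · rintro j t' h
        obtain ⟨rfl, rfl⟩ := List.cons.inj h
        exact ⟨rfl, h0⟩
      · rintro j t' h
        obtain ⟨rfl, rfl⟩ := List.cons.inj h
        exact ⟨rfl, h1⟩
      · exact hst.trans ⟨u ++ [0], by simp⟩
      · exact hst.trans ⟨u ++ [1], by simp⟩
      · exact inc (i :: (t ++ u))
    · rintro j t h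
      obtain ⟨rfl, rfl⟩ := List.cons.inj h
      exact ⟨rfl, trivial⟩
end

section
/- Fix k ≥ 2. Let H be a hypergraph with vertex set ℕ and edges given by a sequence e : ℕ → Set ℕ. Fix an injective coding c of finite subsets of ℕ into ℕ. Define T ⊆ List ℕ to consist of those sequences σ (of length m+1, say) such that for every i ≤ m: if i = 2j, then either σ.get i = c {u, v} for some two distinct vertices u, v ∈ e j, or σ.get i = c ∅ and e j does not contain two distinct vertices both belonging to {0, 1, …, m}; if i = 2j+1, then σ.get i < k (interpreted as a color for vertex j); and moreover for every j with 2j ≤ m, if σ.get (2j) = c {u, v} with u ≠ v and both 2u+1 ≤ m and 2v+1 ≤ m, then σ.get (2u+1) ≠ σ.get (2v+1). Then T is a tree, and H has a proper k-coloring if and only if T has an infinite path. -/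
/-- `f` is a proper coloring of the hypergraph with vertex set `ℕ` and edges `e`:
every edge containing at least two vertices contains two vertices of different colors. -/
def IsProperColoring {k : ℕ} (e : ℕ → Set ℕ) (f : ℕ → Fin k) : Prop :=
  ∀ j : ℕ, (∃ u ∈ e j, ∃ v ∈ e j, u ≠ v) →
    ∃ u ∈ e j, ∃ v ∈ e j, u ≠ v ∧ f u ≠ f v

theorem hpc_tree (k : ℕ) (hk : 2 ≤ k) (e : ℕ → Set ℕ)
    (c : Finset ℕ → ℕ) (hc : Function.Injective c)
    (T : Set (List ℕ))
    (hT : T = {σ : List ℕ |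
      (∀ j : ℕ, ∀ hj : 2 * j < σ.length,
        (∃ u v : ℕ, u ∈ e j ∧ v ∈ e j ∧ u ≠ v ∧ σ.get ⟨2 * j, hj⟩ = c {u, v}) ∨
        (σ.get ⟨2 * j, hj⟩ = c (∅ : Finset ℕ) ∧
          ¬ ∃ u v : ℕ, u ∈ e j ∧ v ∈ e j ∧ u ≠ v ∧ u < σ.length ∧ v < σ.length)) ∧
      (∀ j : ℕ, ∀ hj : 2 * j + 1 < σ.length, σ.get ⟨2 * j + 1, hj⟩ < k) ∧
      (∀ j u v : ℕ, ∀ hj : 2 * j < σ.length,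
        ∀ hu : 2 * u + 1 < σ.length, ∀ hv : 2 * v + 1 < σ.length,
        u ≠ v → σ.get ⟨2 * j, hj⟩ = c {u, v} →
        σ.get ⟨2 * u + 1, hu⟩ ≠ σ.get ⟨2 * v + 1, hv⟩)}) :
    IsTree T ∧
      ((∃ f : ℕ → Fin k, IsProperColoring e f) ↔ ∃ p : ℕ → ℕ, IsPath T p) := by
  subst hT
  refine ⟨?_, ?_, ?_⟩
  · rintro σ ⟨h1, h2, h3⟩ τ hτ
    obtain ⟨ρ, rfl⟩ := hτ
    have hl : ∀ i, i < τ.length → i < (τ ++ ρ).length := by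
      intro i hi
      simp only [List.length_append]
      omega
    have hg : ∀ i (hi : i < τ.length), (τ ++ ρ).get ⟨i, hl i hi⟩ = τ.get ⟨i, hi⟩ := by
      intro i hi
      simp [List.getElem_append_left hi]
    refine ⟨?_, ?_, ?_⟩
    · intro j hj
      have h := h1 j (hl _ hj)
      rw [hg _ hj] at h
      rcases h with h | ⟨h, h'⟩
      · exact Or.inl h
      · refine Or.inr ⟨h, ?_⟩
        rintro ⟨u, v, hu, hv, huv, hul, hvl⟩
        exact h' ⟨u, v, hu, hv, huv, hl _ hul, hl _ hvl⟩
    · intro j hj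
      have h := h2 j (hl _ hj)
      rwa [hg _ hj] at h
    · intro j u v hj hu hv huv h
      have h' := h3 j u v (hl _ hj) (hl _ hu) (hl _ hv) huv
      rw [hg _ hj, hg _ hu, hg _ hv] at h'
      exact h' h
  · rintro ⟨f, hf⟩
    have hq : ∀ j, ∃ q : ℕ, (∃ u v : ℕ, u ∈ e j ∧ v ∈ e j ∧ u ≠ v ∧ f u ≠ f v ∧ q = c {u, v}) ∨
        (q = c ∅ ∧ ¬ ∃ u v : ℕ, u ∈ e j ∧ v ∈ e j ∧ u ≠ v) := by
      intro j
      by_cases h : ∃ u ∈ e j, ∃ v ∈ e j, u ≠ v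
      · obtain ⟨u, hu, v, hv, huv, hc'⟩ := hf j h
        exact ⟨_, Or.inl ⟨u, v, hu, hv, huv, hc', rfl⟩⟩
      · refine ⟨_, Or.inr ⟨rfl, ?_⟩⟩
        rintro ⟨u, v, hu, hv, huv⟩
        exact h ⟨u, hu, v, hv, huv⟩
    choose q hq using hq
    let p : ℕ → ℕ := fun n => if n % 2 = 0 then q (n / 2) else (f (n / 2)).val
    have hp0 : ∀ j, p (2 * j) = q j := by
      intro j
      simp [p]
    have hp1 : ∀ j, p (2 * j + 1) = (f j).val := by
      intro j
      have ha : (2 * j + 1) % 2 = 1 := by omega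
      have hb : (2 * j + 1) / 2 = j := by omega
      simp [p, ha, hb]
    refine ⟨p, fun n => ⟨?_, ?_, ?_⟩⟩
    · intro j hj
      simp only [List.get_ofFn, Fin.val_cast, hp0]
      rcases hq j with ⟨u, v, hu, hv, huv, _, h⟩ | ⟨h, h'⟩
      · exact Or.inl ⟨u, v, hu, hv, huv, h⟩
      · refine Or.inr ⟨h, ?_⟩
        rintro ⟨u, v, hu, hv, huv, _⟩
        exact h' ⟨u, v, hu, hv, huv⟩
    · intro j hj
      simp only [List.get_ofFn, Fin.val_cast, hp1]
      exact (f j).isLt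
    · intro j u v hj hu hv huv h
      simp only [List.get_ofFn, Fin.val_cast, hp0, hp1] at h ⊢
      intro hfe
      have hfe := Fin.ext hfe
      rcases hq j with ⟨a, b, _, _, hab, hfab, h2⟩ | ⟨h2, _⟩
      · have hs := hc (h2.symm.trans h)
        have ha : a ∈ ({u, v} : Finset ℕ) := by rw [← hs]; simp
        have hb : b ∈ ({u, v} : Finset ℕ) := by rw [← hs]; simp
        simp only [Finset.mem_insert, Finset.mem_singleton] at ha hb
        rcases ha with rfl | rfl <;> rcases hb with rfl | rfl <;> simp_all
      · have hs := hc (h2.symm.trans h)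
        have : u ∈ (∅ : Finset ℕ) := by rw [hs]; simp
        simp at this
  · rintro ⟨p, hp⟩
    have hlt : ∀ j, p (2 * j + 1) < k := by
      intro j
      have h := (hp (2 * j + 2)).2.1 j (by simp)
      simpa only [List.get_ofFn, Fin.val_cast] using h
    refine ⟨fun j => ⟨p (2 * j + 1), hlt j⟩, ?_⟩
    rintro j ⟨u, hu, v, hv, huv⟩
    have h := (hp (2 * j + u + v + 1)).1 j (by simp only [List.length_ofFn]; omega)
    simp only [List.get_ofFn, Fin.val_cast, List.length_ofFn] at h
    rcases h with ⟨a, b, ha, hb, hab, h⟩ | ⟨_, h⟩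
    · refine ⟨a, ha, b, hb, hab, ?_⟩
      have h3 := (hp (2 * j + 2 * a + 2 * b + 2)).2.2 j a b
        (by simp only [List.length_ofFn]; omega) (by simp only [List.length_ofFn]; omega)
        (by simp only [List.length_ofFn]; omega) hab
      simp only [List.get_ofFn, Fin.val_cast] at h3
      intro he
      exact h3 h (Fin.mk.inj he)
    · exact absurd ⟨u, v, hu, hv, huv, by omega, by omega⟩ h
end

section
/- Let T ⊆ List ℕ be a nonempty tree. Define a hypergraph H as follows. The vertices of H are five distinguished vertices a₀, a₁, b₀, b₁, s together with two vertices σ₀ and σ₁ for each σ ∈ T. The edges of H are: the pairs {a₀, a₁}, {a₁, s}, {b₀, b₁}, {b₁, s}; the pair {σ₀, σ₁} for every nonempty σ ∈ T; the pair {σ₁, s} for every leaf σ of T; the set E_σ = {σ₁} ∪ { τ₀ | τ ∈ T and τ = σ ++ [n] for some n } for every σ ∈ T that is not a leaf; and the set E₀ = {a₀, b₀} ∪ { σ₀ | σ ∈ T and σ.length = 1 }. Then H has a proper 2-coloring if and only if T has an infinite path. -/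
/-- The vertices of the hypergraph: five distinguished vertices
`a₀ = inl 0`, `a₁ = inl 1`, `b₀ = inl 2`, `b₁ = inl 3`, `s = inl 4`,
together with vertices `σ₀ = inr (σ, false)` and `σ₁ = inr (σ, true)`
for sequences `σ`. -/
abbrev Vtx : Type := Fin 5 ⊕ (List ℕ × Bool)

theorem ofFn_snoc_aux (p : ℕ → ℕ) (n : ℕ) :
    (List.ofFn fun i : Fin (n+1) => p i) = (List.ofFn fun i : Fin n => p i) ++ [p n] := by
  rw [List.ofFn_succ']
  simp

theorem path_of_step (T : Set (List ℕ)) (G : List ℕ → Prop) (h0 : G [])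
    (hG : ∀ σ, G σ → σ ∈ T) (hs : ∀ σ, G σ → ∃ n, G (σ ++ [n])) :
    ∃ p : ℕ → ℕ, IsPath T p := by
  classical
  choose! nx hnx using hs
  let q : ℕ → List ℕ := fun n => Nat.rec [] (fun _ l => l ++ [nx l]) n
  have hq : ∀ n, G (q n) := by
    intro n
    induction n with
    | zero => exact h0
    | succ k ih => exact hnx _ ih
  refine ⟨fun n => nx (q n), fun n => ?_⟩
  have : (List.ofFn fun i : Fin n => nx (q i)) = q n := by
    induction n with
    | zero => simp [q]
    | succ k ih => rw [ofFn_snoc_aux (fun n => nx (q n)), ih]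
  rw [this]
  exact hG _ (hq n)

theorem pair_edge {V : Type*} (f : V → Fin 2) (x y : V)
    (h : ∃ u ∈ ({x, y} : Set V), ∃ v ∈ ({x, y} : Set V), u ≠ v ∧ f u ≠ f v) : f x ≠ f y := by
  obtain ⟨u, hu, v, hv, -, hf⟩ := h
  simp only [Set.mem_insert_iff, Set.mem_singleton_iff] at hu hv
  rcases hu with rfl | rfl <;> rcases hv with rfl | rfl <;> first | exact hf | exact hf.symm | exact absurd rfl hf

theorem pair_edge' {V : Type*} (f : V → Fin 2) (x y : V) (h : f x ≠ f y) :
    ∃ u ∈ ({x, y} : Set V), ∃ v ∈ ({x, y} : Set V), u ≠ v ∧ f u ≠ f v :=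
  ⟨x, by simp, y, by simp, fun e => h (by rw [e]), h⟩

theorem two_edge {V : Type*} (f : V → Fin 2) (ed : Set V) (x y : V) (hx : x ∈ ed) (hy : y ∈ ed)
    (h : f x ≠ f y) : ∃ u ∈ ed, ∃ v ∈ ed, u ≠ v ∧ f u ≠ f v :=
  ⟨x, hx, y, hy, fun e => h (by rw [e]), h⟩

theorem mono_edge {V : Type*} (f : V → Fin 2) (ed : Set V) (c : Fin 2)
    (h : ∃ u ∈ ed, ∃ v ∈ ed, u ≠ v ∧ f u ≠ f v) : ∃ u ∈ ed, f u ≠ c := by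
  obtain ⟨u, hu, v, hv, -, hf⟩ := h
  by_cases hc : f u = c
  · exact ⟨v, hv, fun e => hf (hc.trans e.symm)⟩
  · exact ⟨u, hu, hc⟩

theorem fin2_aux {x y z : Fin 2} (h : x ≠ y) (h' : y ≠ z) : x = z := by omega

theorem tree_coloring (T : Set (List ℕ)) (hT : IsTree T) (hne : ([] : List ℕ) ∈ T)
    (E : Set (Set Vtx))
    (hE : E = ({ {Sum.inl 0, Sum.inl 1}, {Sum.inl 1, Sum.inl 4},
          {Sum.inl 2, Sum.inl 3}, {Sum.inl 3, Sum.inl 4} } : Set (Set Vtx))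
        ∪ {ed : Set Vtx | ∃ σ ∈ T, σ ≠ [] ∧
            ed = {Sum.inr (σ, false), Sum.inr (σ, true)}}
        ∪ {ed : Set Vtx | ∃ σ ∈ T, (∀ n : ℕ, σ ++ [n] ∉ T) ∧
            ed = {Sum.inr (σ, true), Sum.inl 4}}
        ∪ {ed : Set Vtx | ∃ σ ∈ T, (∃ n : ℕ, σ ++ [n] ∈ T) ∧
            ed = insert (Sum.inr (σ, true))
              {v : Vtx | ∃ n : ℕ, σ ++ [n] ∈ T ∧ v = Sum.inr (σ ++ [n], false)}}
        ∪ { insert (Sum.inl 0) (insert (Sum.inl 2)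
            {v : Vtx | ∃ σ ∈ T, σ.length = 1 ∧ v = Sum.inr (σ, false)}) }) :
    (∃ f : Vtx → Fin 2, ∀ ed ∈ E, (∃ u ∈ ed, ∃ v ∈ ed, u ≠ v) →
        ∃ u ∈ ed, ∃ v ∈ ed, u ≠ v ∧ f u ≠ f v) ↔
      ∃ p : ℕ → ℕ, IsPath T p := by
  constructor
  · rintro ⟨f, hf⟩
    have hpair : ∀ x y : Vtx, ({x, y} : Set Vtx) ∈ E → x ≠ y → f x ≠ f y := fun x y hm hxy =>
      pair_edge f x y (hf _ hm ⟨x, by simp, y, by simp, hxy⟩)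
    have ha : f (Sum.inl 0) = f (Sum.inl 4) :=
      fin2_aux (hpair (Sum.inl 0) (Sum.inl 1) (by rw [hE]; simp) (by simp))
        (hpair (Sum.inl 1) (Sum.inl 4) (by rw [hE]; simp) (by simp))
    have hb : f (Sum.inl 2) = f (Sum.inl 4) :=
      fin2_aux (hpair (Sum.inl 2) (Sum.inl 3) (by rw [hE]; simp) (by simp))
        (hpair (Sum.inl 3) (Sum.inl 4) (by rw [hE]; simp) (by simp))
    refine path_of_step T
      (fun σ => σ ∈ T ∧ (σ = [] ∨ f (Sum.inr (σ, false)) ≠ f (Sum.inl 4))) ⟨hne, Or.inl rfl⟩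
      (fun σ h => h.1) ?_
    rintro σ ⟨hσ, h⟩
    by_cases hnil : σ = []
    · subst hnil
      obtain ⟨u, hu, huc⟩ := mono_edge f _ (f (Sum.inl 4))
        (hf (insert (Sum.inl 0) (insert (Sum.inl 2)
            {v : Vtx | ∃ σ ∈ T, σ.length = 1 ∧ v = Sum.inr (σ, false)}))
          (by rw [hE]; exact Or.inr rfl)
          ⟨Sum.inl 0, by simp, Sum.inl 2, by simp, by simp⟩)
      rcases hu with rfl | rfl | ⟨τ, hτ, hl, rfl⟩
      · exact absurd ha huc
      · exact absurd hb huc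
      · obtain ⟨n, rfl⟩ := List.length_eq_one_iff.1 hl
        exact ⟨n, hτ, Or.inr huc⟩
    · have h := h.resolve_left hnil
      have h1 : f (Sum.inr (σ, true)) = f (Sum.inl 4) := by
        refine fin2_aux (hpair (Sum.inr (σ, false)) (Sum.inr (σ, true)) ?_ (by simp)).symm h
        rw [hE]
        exact Or.inl (Or.inl (Or.inl (Or.inr ⟨σ, hσ, hnil, rfl⟩)))
      have hnl : ∃ n, σ ++ [n] ∈ T := by
        by_contra hc
        push Not at hc
        refine hpair (Sum.inr (σ, true)) (Sum.inl 4) ?_ (by simp) h1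
        rw [hE]
        exact Or.inl (Or.inl (Or.inr ⟨σ, hσ, hc, rfl⟩))
      obtain ⟨m, hm⟩ := hnl
      obtain ⟨u, hu, huc⟩ := mono_edge f _ (f (Sum.inl 4))
        (hf (insert (Sum.inr (σ, true))
              {v : Vtx | ∃ n : ℕ, σ ++ [n] ∈ T ∧ v = Sum.inr (σ ++ [n], false)})
          (by rw [hE]; exact Or.inl (Or.inr ⟨σ, hσ, ⟨m, hm⟩, rfl⟩))
          ⟨Sum.inr (σ, true), Or.inl rfl, Sum.inr (σ ++ [m], false), Or.inr ⟨m, hm, rfl⟩, by simp⟩)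
      rcases hu with rfl | ⟨n, hn, rfl⟩
      · exact absurd h1 huc
      · exact ⟨n, hn, Or.inr huc⟩
  · rintro ⟨p, hp⟩
    classical
    let g : ℕ → List ℕ := fun n => List.ofFn fun i : Fin n => p i
    have hg : ∀ n, g (n+1) = g n ++ [p n] := ofFn_snoc_aux p
    let P : List ℕ → Prop := fun σ => ∃ n, σ = g n
    have hPs : ∀ σ n, P (σ ++ [n]) → P σ := by
      rintro σ n ⟨k, hk⟩
      cases k with
      | zero => simp [g] at hk
      | succ k =>
        rw [hg] at hk
        exact ⟨k, (List.append_inj' hk rfl).1⟩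
    let f : Vtx → Fin 2 := fun v => match v with
      | Sum.inl i => if i = 1 ∨ i = 3 then 1 else 0
      | Sum.inr (σ, false) => if P σ then 1 else 0
      | Sum.inr (σ, true) => if P σ then 0 else 1
    refine ⟨f, fun ed hed _ => ?_⟩
    rw [hE] at hed
    rcases hed with (((hed | ⟨σ, hσ, hn, rfl⟩) | ⟨σ, hσ, hl, rfl⟩) | ⟨σ, hσ, ⟨n, hn⟩, rfl⟩) | rfl
    · rcases hed with rfl | rfl | rfl | rfl <;> apply pair_edge' <;> simp [f]
    · apply pair_edge'
      by_cases h : P σ <;> simp [f, h]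
    · apply pair_edge'
      have h : ¬ P σ := by
        rintro ⟨k, rfl⟩
        exact hl (p k) (hg k ▸ hp (k+1))
      simp [f, h]
    · by_cases h : P σ
      · obtain ⟨k, hk⟩ := id h
        have h2 : P (σ ++ [p k]) := ⟨k+1, by rw [hg, hk]⟩
        have h3 : σ ++ [p k] ∈ T := by rw [hk, ← hg]; exact hp (k+1)
        refine two_edge f _ (Sum.inr (σ, true)) (Sum.inr (σ ++ [p k], false)) (Or.inl rfl)
          (Or.inr ⟨_, h3, rfl⟩) ?_
        simp [f, h, h2]
      · have h2 : ¬ P (σ ++ [n]) := fun h' => h (hPs _ _ h')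
        refine two_edge f _ (Sum.inr (σ, true)) (Sum.inr (σ ++ [n], false)) (Or.inl rfl)
          (Or.inr ⟨_, hn, rfl⟩) ?_
        simp [f, h, h2]
    · have h2 : P (g 1) := ⟨1, rfl⟩
      refine two_edge f _ (Sum.inl 0) (Sum.inr (g 1, false)) (Or.inl rfl)
          (Or.inr (Or.inr ⟨g 1, hp 1, by simp [g], rfl⟩)) ?_
      simp [f, h2]
end
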